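/- Let τ ∈ [0, π/2), A_τ = !![1, -exp(i·τ); 0, 0] and B_τ = !![0, 0; 1, exp(-i·τ)]. Then det(A_τ + i·k·B_τ) = 2·i·k·cos τ for every k ∈ ℂ, and for every k ∈ ℂ with k ≠ 0 the matrix A_τ + i·k·B_τ is invertible and the Cayley transform equals 𝔖(k;A_τ,B_τ) = (cos τ)⁻¹ • !![i·sin τ, 1; 1, -i·sin τ] (in particular it is independent of k). -/

import Mathlib

/-- The Cayley transform `𝔖(k;A,B) = -(A + i·k·B)⁻¹ (A - i·k·B)`. -/
noncomputable def cayley (A B : Matrix (Fin 2) (Fin 2) ℂ) (k : ℂ) : Matrix (Fin 2) (Fin 2) ℂ :=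
  -((A + (Complex.I * k) • B)⁻¹ * (A - (Complex.I * k) • B))

/-!
`A_τ` lives in the first row and `B_τ` in the second, so multiplying `B_τ` by a scalar `c` amounts
to multiplying `A_τ ± B_τ` on the left by `diag(1, c)`. This common left factor cancels in
`(A_τ + c B_τ)⁻¹ (A_τ - c B_τ)`, which is why the Cayley transform does not depend on `k`; what is
left is a single `2 × 2` inverse. With `p = exp(iτ)` and `q = exp(-iτ)` everything is rational in
`p` and `q`, and `p + q = 2 cos τ`, `p - q = 2i sin τ`, `p q = 1`.
-/

open Matrix

section SmulAdd

variable {R S : Type*} [CommSemiring R] [Ring S] [Algebra R S] {P A B : S}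

theorem add_smul_eq_mul_add (hA : P * A = A) (hB : P * B = 0) (c : R) :
    A + c • B = (P + c • (1 - P)) * (A + B) := by
  simp only [add_mul, mul_add, smul_mul_assoc, sub_mul, one_mul, hA, hB, sub_self, sub_zero,
    smul_zero, zero_add, add_zero]

theorem sub_smul_eq_mul_sub (hA : P * A = A) (hB : P * B = 0) (c : R) :
    A - c • B = (P + c • (1 - P)) * (A - B) := by
  have hB' : P * -B = 0 := by rw [mul_neg, hB, neg_zero]
  simpa only [smul_neg, ← sub_eq_add_neg] using add_smul_eq_mul_add hA hB' c

end SmulAdd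

theorem inv_add_smul_mul_sub_smul {n R : Type*} [Fintype n] [DecidableEq n] [CommRing R]
    {P A B : Matrix n n R} (hA : P * A = A) (hB : P * B = 0) {c : R} (hc : IsUnit (A + c • B)) :
    (A + c • B)⁻¹ * (A - c • B) = (A + B)⁻¹ * (A - B) := by
  have hD : IsUnit (P + c • (1 - P)).det := by
    rw [isUnit_iff_isUnit_det, add_smul_eq_mul_add hA hB, det_mul] at hc
    exact isUnit_of_mul_isUnit_left hc
  rw [add_smul_eq_mul_add hA hB, sub_smul_eq_mul_sub hA hB, Matrix.mul_inv_rev, Matrix.mul_assoc,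
    nonsing_inv_mul_cancel_left _ _ hD]

theorem cayley_eq_neg_inv_add_mul_sub {P A B : Matrix (Fin 2) (Fin 2) ℂ} (hA : P * A = A)
    (hB : P * B = 0) {k : ℂ} (hk : IsUnit (A + (Complex.I * k) • B)) :
    cayley A B k = -((A + B)⁻¹ * (A - B)) := by
  rw [cayley, inv_add_smul_mul_sub_smul hA hB hk]

theorem det_upperRow_add_smul_lowerRow {R : Type*} [CommRing R] (p q c : R) :
    (!![1, -p; 0, 0] + c • !![0, 0; 1, q]).det = c * (p + q) := by
  have hsum : !![1, -p; 0, 0] + c • !![0, 0; 1, q] = !![1, -p; c, c * q] := by simp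
  rw [hsum, det_fin_two_of]
  ring

-- For `p + q = 0` both sides are `0`, since singular matrices have junk inverse `0`.
theorem neg_inv_upperRow_add_lowerRow_mul_sub {K : Type*} [Field K] (p q : K) :
    -((!![1, -p; 0, 0] + !![0, 0; 1, q])⁻¹ * (!![1, -p; 0, 0] - !![0, 0; 1, q])) =
      (p + q)⁻¹ • !![p - q, 2 * (p * q); 2, q - p] := by
  have hsum : !![1, -p; 0, 0] + !![0, 0; 1, q] = !![1, -p; 1, q] := by simp
  have hdiff : !![1, -p; 0, 0] - !![0, 0; 1, q] = !![1, -p; -1, -q] := by simp [sub_eq_add_neg]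
  have hdet : !![1, -p; 1, q].det = p + q := by rw [det_fin_two_of]; ring
  have hadj : !![1, -p; 1, q].adjugate * !![1, -p; -1, -q] =
      -!![p - q, 2 * (p * q); 2, q - p] := by
    ext i j
    fin_cases i <;> fin_cases j <;> simp [adjugate_fin_two_of] <;> ring
  rw [hsum, hdiff, inv_def, hdet, Ring.inverse_eq_inv', smul_mul, hadj, smul_neg, neg_neg]

theorem cayley_upperRow_lowerRow {p q k : ℂ}
    (hk : IsUnit (!![1, -p; 0, 0] + (Complex.I * k) • !![0, 0; 1, q])) :
    cayley !![1, -p; 0, 0] !![0, 0; 1, q] k = (p + q)⁻¹ • !![p - q, 2 * (p * q); 2, q - p] := by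
  have hA : !![1, 0; 0, 0] * !![1, -p; 0, 0] = !![1, -p; 0, 0] := by
    simp only [mul_fin_two, one_mul, zero_mul, add_zero]
  have hB : !![1, 0; 0, 0] * !![0, 0; 1, q] = 0 := by
    rw [mul_fin_two, eta_fin_two 0]
    simp
  rw [cayley_eq_neg_inv_add_mul_sub hA hB hk, neg_inv_upperRow_add_lowerRow_mul_sub]

theorem exp_I_mul_add_exp_neg_I_mul (τ : ℂ) :
    Complex.exp (Complex.I * τ) + Complex.exp (-(Complex.I * τ)) = 2 * Complex.cos τ := by
  rw [Complex.two_cos, neg_mul, mul_comm τ]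

theorem exp_I_mul_sub_exp_neg_I_mul (τ : ℂ) :
    Complex.exp (Complex.I * τ) - Complex.exp (-(Complex.I * τ)) =
      2 * (Complex.I * Complex.sin τ) := by
  rw [mul_left_comm, Complex.two_sin, neg_mul, mul_comm τ]
  linear_combination (Complex.exp (Complex.I * τ) - Complex.exp (-(Complex.I * τ))) * Complex.I_sq

theorem stmt_9_general (τ : ℂ) (A B : Matrix (Fin 2) (Fin 2) ℂ)
    (hA : A = !![1, -Complex.exp (Complex.I * τ); 0, 0])
    (hB : B = !![0, 0; 1, Complex.exp (-(Complex.I * τ))]) :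
    (∀ k : ℂ, (A + (Complex.I * k) • B).det = 2 * Complex.I * k * Complex.cos τ) ∧
    (Complex.cos τ ≠ 0 → ∀ k : ℂ, k ≠ 0 →
      IsUnit (A + (Complex.I * k) • B) ∧
      cayley A B k = (Complex.cos τ)⁻¹ •
        !![Complex.I * Complex.sin τ, 1; 1, -(Complex.I * Complex.sin τ)]) := by
  have hdet (k : ℂ) : (A + (Complex.I * k) • B).det = 2 * Complex.I * k * Complex.cos τ := by
    rw [hA, hB, det_upperRow_add_smul_lowerRow, exp_I_mul_add_exp_neg_I_mul]
    ring
  refine ⟨hdet, fun hτ k hk => ?_⟩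
  have hunit : IsUnit (A + (Complex.I * k) • B) := by
    rw [isUnit_iff_isUnit_det, hdet, isUnit_iff_ne_zero]
    simp [hk, hτ]
  have hexp : Complex.exp (Complex.I * τ) * Complex.exp (-(Complex.I * τ)) = 1 := by
    rw [← Complex.exp_add, add_neg_cancel, Complex.exp_zero]
  refine ⟨hunit, ?_⟩
  subst hA hB
  rw [cayley_upperRow_lowerRow hunit, hexp, ← neg_sub (Complex.exp (Complex.I * τ)),
    exp_I_mul_add_exp_neg_I_mul, exp_I_mul_sub_exp_neg_I_mul]
  simp [smul_of, mul_assoc]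

/-- For the PT-symmetric boundary conditions `A_τ = !![1, -e^{iτ}; 0, 0]`,
`B_τ = !![0, 0; 1, e^{-iτ}]` with `τ ∈ [0, π/2)`: `det(A_τ + i·k·B_τ) = 2·i·k·cos τ`, and for
`k ≠ 0` the Cayley transform equals `(cos τ)⁻¹ • !![i·sin τ, 1; 1, -i·sin τ]`. -/
theorem stmt_9 (τ : ℝ) (hτ0 : 0 ≤ τ) (hτ1 : τ < Real.pi / 2)
    (A B : Matrix (Fin 2) (Fin 2) ℂ)
    (hA : A = !![1, -Complex.exp (Complex.I * τ); 0, 0])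
    (hB : B = !![0, 0; 1, Complex.exp (-(Complex.I * τ))]) :
    (∀ k : ℂ, (A + (Complex.I * k) • B).det = 2 * Complex.I * k * Real.cos τ) ∧
    (∀ k : ℂ, k ≠ 0 →
      IsUnit (A + (Complex.I * k) • B) ∧
      cayley A B k = ((Real.cos τ : ℂ))⁻¹ •
        !![Complex.I * Real.sin τ, 1; 1, -(Complex.I * Real.sin τ)]) := by
  obtain ⟨hdet, hcayley⟩ := stmt_9_general τ A B hA hB
  have hcos : Complex.cos τ ≠ 0 := mod_cast (Real.cos_pos_of_mem_Ioo ⟨by linarith, hτ1⟩).ne'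
  exact ⟨mod_cast hdet, mod_cast hcayley hcos⟩
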